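/- If ρ(H^max) < 1, then ρ(H(k)) < 1 for every carrier k ∈ {1,…,N}; consequently game G admits exactly one Nash equilibrium. (Corollary 1: condition C2 is sufficient for condition C1.) -/

import Mathlib

/-!
Fix the strategies of the other users and put `a k = Γ_q (1 + interference) / |H_qq(k)|²`, so that
the payoff of user `q` is the mean of `log (1 + p k / a k)`. Let `x` be the waterfilling response,
with water level `μ`. The inequality `log t < t - 1` bounds the gain of a deviation `y` by
`∑ (y k - x k) / (a k + x k)`, and the variational inequality of the projection bounds this by
`∑ (y k - x k) / μ ≤ 0`. Hence waterfilling is the unique best response, and the equilibria are the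
fixed points of the simultaneous waterfilling map.

The projection onto an interval is firmly nonexpansive. Waterfilling responses all have the same
total power, so the water levels cancel on summing over the carriers, and Cauchy–Schwarz gives
`‖WF_q(p) - WF_q(p')‖ ≤ ∑ r, H^max_qr ‖p_r - p'_r‖` whenever each user `r` loads only carriers of
`D_r`. If `ρ(H^max) < 1`, Gelfand's formula yields a power of `H^max` of row-sum norm less than one,
so an iterate of the waterfilling map is a contraction and the map has exactly one fixed point.

Since `0 ≤ H(k) ≤ H^max` entrywise, the same holds for all powers, and Gelfand's formula gives
`ρ(H(k)) ≤ ρ(H^max)`.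
-/

open scoped ENNReal

namespace NCGame

/-- The data of game `G`: `Q` users, `N` carriers, channel gains `chan r q k` (from source `r`
to destination `q` on carrier `k`), gap parameters `gap q ≥ 1`, and spectral-mask limits
`pmax q k ∈ (0, ∞]`. -/
structure GameData (Q N : ℕ) where
  chan : Fin Q → Fin Q → Fin N → ℂ
  gap : Fin Q → ℝ
  pmax : Fin Q → Fin N → ℝ≥0∞
  chan_diag_ne : ∀ q k, chan q q k ≠ 0
  one_le_gap : ∀ q, 1 ≤ gap q
  pmax_pos : ∀ q k, 0 < pmax q k

namespace GameData

variable {Q N : ℕ}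

/-- The strategy set `P_q` of user `q`: powers within the spectral mask whose average
does not exceed the power budget. -/
def stratSet (G : GameData Q N) (q : Fin Q) : Set (Fin N → ℝ) :=
  { p | (∀ k, 0 ≤ p k ∧ ENNReal.ofReal (p k) ≤ G.pmax q k) ∧
        (1 / (N : ℝ)) * ∑ k, p k ≤ 1 }

/-- Interference-plus-noise `1 + Σ_{r ≠ q} |H_rq(k)|² p_r(k)` seen by user `q` on carrier `k`. -/
noncomputable def interf (G : GameData Q N) (q : Fin Q) (p : Fin Q → Fin N → ℝ)
    (k : Fin N) : ℝ :=
  1 + ∑ r ∈ Finset.univ.erase q, ‖G.chan r q k‖ ^ 2 * p r k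

/-- The payoff `R_q(p)` of user `q` at the strategy profile `p`. -/
noncomputable def payoff (G : GameData Q N) (q : Fin Q) (p : Fin Q → Fin N → ℝ) : ℝ :=
  (1 / (N : ℝ)) * ∑ k, Real.log (1 +
    (1 / G.gap q) * (‖G.chan q q k‖ ^ 2 * p q k) / G.interf q p k)

/-- `p` is a Nash equilibrium of game `G`. -/
def isNE (G : GameData Q N) (p : Fin Q → Fin N → ℝ) : Prop :=
  (∀ q, p q ∈ G.stratSet q) ∧
  ∀ q, ∀ pq ∈ G.stratSet q, G.payoff q (Function.update p q pq) ≤ G.payoff q p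

end GameData

end NCGame

namespace NCGame

/-- Euclidean projection of `x` onto the interval `[0, b]`, where `b ∈ (0, ∞]`. -/
noncomputable def proj (x : ℝ) (b : ℝ≥0∞) : ℝ :=
  if b = ⊤ then max 0 x else min b.toReal (max 0 x)

namespace GameData

variable {Q N : ℕ}

/-- `p` is an admissible strategy profile of the users other than `q` (the `q`-th component
is irrelevant). -/
def otherStrats (G : GameData Q N) (q : Fin Q) (p : Fin Q → Fin N → ℝ) : Prop :=
  ∀ r, r ≠ q → p r ∈ G.stratSet r

/-- `wf` is the waterfilling response `WF_q(p_{-q})` of user `q` to the strategies `p` of the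
other users: there is a water level `μ` such that each component is the projection of
`μ − Γ_q (1 + Σ_{r≠q}|H_rq(k)|² p_r(k))/|H_qq(k)|²` onto `[0, p_q^max(k)]`, and the average
power equals `1`. -/
def isWFResp (G : GameData Q N) (q : Fin Q) (p : Fin Q → Fin N → ℝ)
    (wf : Fin N → ℝ) : Prop :=
  (∃ μ : ℝ, ∀ k, wf k =
      proj (μ - G.gap q * G.interf q p k / ‖G.chan q q k‖ ^ 2) (G.pmax q k)) ∧
  (1 / (N : ℝ)) * ∑ k, wf k = 1

/-- The set `D_q` of carriers that user `q` can possibly use in a waterfilling best response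
to some admissible strategy of the other users. -/
def Dset (G : GameData Q N) (q : Fin Q) : Set (Fin N) :=
  { k | ∃ p wf, G.otherStrats q p ∧ G.isWFResp q p wf ∧ wf k ≠ 0 }

open Classical in
/-- The matrix `H(k)` of normalized cross-channel gains. -/
noncomputable def Hmat (G : GameData Q N) (k : Fin N) : Matrix (Fin Q) (Fin Q) ℝ :=
  fun q r =>
    if r ≠ q ∧ k ∈ G.Dset q ∧ k ∈ G.Dset r then
      G.gap q * ‖G.chan r q k‖ ^ 2 / ‖G.chan q q k‖ ^ 2
    else 0

end GameData

/-- Spectral radius of a real square matrix: the largest modulus of its (complex) spectrum. -/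
noncomputable def specRad {Q : ℕ} (M : Matrix (Fin Q) (Fin Q) ℝ) : ℝ :=
  sSup ((fun z => ‖z‖) '' spectrum ℂ (M.map (Complex.ofReal ·)))

end NCGame

namespace NCGame.GameData

open Classical in
/-- The matrix `H^max` whose off-diagonal entries are the maxima over `D_q ∩ D_r` of the
normalized cross-channel gains (`0` if the intersection is empty, since `sSup ∅ = 0` in `ℝ`). -/
noncomputable def Hmax {Q N : ℕ} (G : NCGame.GameData Q N) : Matrix (Fin Q) (Fin Q) ℝ :=
  fun q r =>
    if r ≠ q then
      sSup ((fun k => G.gap q * ‖G.chan r q k‖ ^ 2 / ‖G.chan q q k‖ ^ 2) ''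
        (G.Dset q ∩ G.Dset r))
    else 0

end NCGame.GameData

namespace NCGame

/-! ### Nonnegative matrices and the spectral radius -/

lemma ofReal_specRad {Q : ℕ} (M : Matrix (Fin Q) (Fin Q) ℝ) :
    ENNReal.ofReal (specRad M) = spectralRadius ℂ (M.map Complex.ofReal) := by
  have hfin : ((fun z : ℂ => ‖z‖) '' spectrum ℂ (M.map Complex.ofReal)).Finite :=
    (Matrix.finite_spectrum _).image _
  refine le_antisymm ?_ (iSup₂_le fun z hz => ?_)
  · rcases (spectrum ℂ (M.map Complex.ofReal)).eq_empty_or_nonempty with hempty | hne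
    · simp [specRad, hempty]
    · obtain ⟨z, hz, hzr⟩ := (hne.image _).csSup_mem hfin
      rw [specRad, ← hzr, ofReal_norm, enorm_eq_nnnorm]
      exact le_iSup₂ (f := fun w (_ : w ∈ spectrum ℂ _) => (‖w‖₊ : ℝ≥0∞)) z hz
  · rw [← enorm_eq_nnnorm, ← ofReal_norm]
    exact ENNReal.ofReal_le_ofReal (le_csSup hfin.bddAbove ⟨z, hz, rfl⟩)

lemma exists_norm_pow_lt_one {A : Type*} [NormedRing A] [NormedAlgebra ℂ A] [CompleteSpace A]
    {a : A} (ha : spectralRadius ℂ a < 1) : ∃ m : ℕ, ‖a ^ m‖ < 1 := by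
  have hgelfand := spectrum.pow_nnnorm_pow_one_div_tendsto_nhds_spectralRadius a
  obtain ⟨m, hm, hm0⟩ :=
    ((hgelfand.eventually_lt_const ha).and (Filter.eventually_gt_atTop 0)).exists
  refine ⟨m, ?_⟩
  have hlt : (‖a ^ m‖₊ : ℝ≥0∞) < 1 := by
    by_contra! hle
    exact hm.not_ge (ENNReal.one_le_rpow hle (by positivity))
  exact_mod_cast hlt

section RowSumNorm

attribute [local instance] Matrix.linftyOpSeminormedAddCommGroup

lemma linfty_opNNNorm_le_of_norm_apply_le {m n R S : Type*} [Fintype m] [Fintype n]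
    [SeminormedAddCommGroup R] [SeminormedAddCommGroup S] {B : Matrix m n R} {A : Matrix m n S}
    (h : ∀ i j, ‖B i j‖ ≤ ‖A i j‖) : ‖B‖₊ ≤ ‖A‖₊ := by
  simp only [Matrix.linfty_opNNNorm_def]
  exact Finset.sup_mono_fun fun i _ => Finset.sum_le_sum fun j _ => h i j

end RowSumNorm

section SquareMatrix

variable {n : Type*} [Fintype n] [DecidableEq n]

lemma norm_pow_apply_le {R : Type*} [SeminormedRing R] [NormOneClass R] {B : Matrix n n R}
    {A : Matrix n n ℝ} (h : ∀ i j, ‖B i j‖ ≤ A i j) (m : ℕ) (i j : n) :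
    ‖(B ^ m) i j‖ ≤ (A ^ m) i j := by
  induction m generalizing i j with
  | zero => rcases eq_or_ne i j with rfl | hij <;> simp [*]
  | succ m ih =>
    rw [pow_succ, pow_succ, Matrix.mul_apply, Matrix.mul_apply]
    refine norm_sum_le_of_le _ fun k _ => (norm_mul_le _ _).trans ?_
    exact mul_le_mul (ih i k) (h k j) (norm_nonneg _) ((norm_nonneg _).trans (ih i k))

attribute [local instance] Matrix.linftyOpNormedRing Matrix.linftyOpNormedAlgebra

lemma nnnorm_map_ofReal_pow (A : Matrix n n ℝ) (m : ℕ) :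
    ‖A.map Complex.ofReal ^ m‖₊ = ‖A ^ m‖₊ := by
  have hpow : A.map Complex.ofReal ^ m = (A ^ m).map Complex.ofReal :=
    (map_pow Complex.ofRealHom.mapMatrix A m).symm
  simp only [hpow, Matrix.linfty_opNNNorm_def, Matrix.map_apply, Complex.nnnorm_real]

theorem spectralRadius_le_of_norm_apply_le {B : Matrix n n ℂ} {A : Matrix n n ℝ}
    (h : ∀ i j, ‖B i j‖ ≤ A i j) :
    spectralRadius ℂ B ≤ spectralRadius ℂ (A.map Complex.ofReal) := by
  have : CompleteSpace (Matrix n n ℂ) := FiniteDimensional.complete ℂ _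
  refine le_of_tendsto_of_tendsto'
    (spectrum.pow_nnnorm_pow_one_div_tendsto_nhds_spectralRadius B)
    (spectrum.pow_nnnorm_pow_one_div_tendsto_nhds_spectralRadius _) fun m => ?_
  rw [nnnorm_map_ofReal_pow]
  gcongr
  exact linfty_opNNNorm_le_of_norm_apply_le fun i j =>
    (norm_pow_apply_le h m i j).trans (Real.le_norm_self _)

lemma exists_norm_pow_lt_one_of_spectralRadius_map {A : Matrix n n ℝ}
    (h : spectralRadius ℂ (A.map Complex.ofReal) < 1) : ∃ m : ℕ, ‖A ^ m‖ < 1 := by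
  have : CompleteSpace (Matrix n n ℂ) := FiniteDimensional.complete ℂ _
  obtain ⟨m, hm⟩ := exists_norm_pow_lt_one h
  exact ⟨m, by rwa [← coe_nnnorm, ← nnnorm_map_ofReal_pow]⟩

/-- **Perov's fixed point theorem**. -/
theorem existsUnique_isFixedPt_of_le_mulVec {X : Type*} [MetricSpace X] [CompleteSpace X]
    [Nonempty X] {d : X → X → n → ℝ} (hd : ∀ x y, 0 ≤ d x y) (hdist : ∀ x y, dist x y = ‖d x y‖)
    {A : Matrix n n ℝ} (hA : ∀ i j, 0 ≤ A i j)
    (hρ : spectralRadius ℂ (A.map Complex.ofReal) < 1) {f : X → X}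
    (hf : ∀ x y, d (f x) (f y) ≤ A.mulVec (d x y)) : ∃! x, Function.IsFixedPt f x := by
  have iterate_le (m : ℕ) (x y : X) : d (f^[m] x) (f^[m] y) ≤ (A ^ m).mulVec (d x y) := by
    induction m generalizing x y with
    | zero => simp
    | succ m ih =>
      rw [Function.iterate_succ_apply, Function.iterate_succ_apply, pow_succ,
        ← Matrix.mulVec_mulVec]
      exact (ih _ _).trans fun i => Finset.sum_le_sum fun j _ =>
        mul_le_mul_of_nonneg_left (hf x y j) (Matrix.pow_apply_nonneg hA m i j)
  obtain ⟨m, hm⟩ := exists_norm_pow_lt_one_of_spectralRadius_map hρ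
  have hcontr : ContractingWith ‖A ^ m‖₊ f^[m] := by
    refine ⟨hm, LipschitzWith.of_dist_le_mul fun x y => ?_⟩
    calc dist (f^[m] x) (f^[m] y) = ‖d (f^[m] x) (f^[m] y)‖ := hdist _ _
      _ ≤ ‖(A ^ m).mulVec (d x y)‖ := by
        refine (pi_norm_le_iff_of_nonneg (norm_nonneg _)).2 fun i => ?_
        rw [Real.norm_of_nonneg (hd _ _ i)]
        exact (iterate_le m x y i).trans ((Real.le_norm_self _).trans (norm_le_pi_norm _ i))
      _ ≤ ‖A ^ m‖ * ‖d x y‖ := Matrix.linfty_opNorm_mulVec _ _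
      _ = ‖A ^ m‖ * dist x y := by rw [hdist]
  exact ⟨_, hcontr.isFixedPt_fixedPoint_iterate,
    fun x hx => hcontr.fixedPoint_unique (hx.iterate m)⟩

end SquareMatrix

lemma dist_eq_norm_dist {ι : Type*} [Fintype ι] {X : ι → Type*} [∀ i, PseudoMetricSpace (X i)]
    (x y : ∀ i, X i) : dist x y = ‖fun i => dist (x i) (y i)‖ := by
  simp only [nndist_pi_def, Pi.norm_def, ← coe_nndist, NNReal.nnnorm_eq]

lemma specRad_mono {Q : ℕ} {A B : Matrix (Fin Q) (Fin Q) ℝ} (h : ∀ i j, |B i j| ≤ A i j) :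
    specRad B ≤ specRad A := by
  have hA : 0 ≤ specRad A := Real.sSup_nonneg fun _ ⟨z, _, hz⟩ => hz ▸ norm_nonneg z
  rw [← ENNReal.ofReal_le_ofReal_iff hA, ofReal_specRad, ofReal_specRad]
  exact spectralRadius_le_of_norm_apply_le fun i j => by
    simpa only [Matrix.map_apply, Complex.norm_real, Real.norm_eq_abs] using h i j

/-! ### Projection onto `[0, b]` -/

lemma proj_nonneg (x : ℝ) (b : ℝ≥0∞) : 0 ≤ proj x b := by
  unfold proj
  split_ifs <;> simp

lemma ofReal_proj (x : ℝ) (b : ℝ≥0∞) : ENNReal.ofReal (proj x b) = min b (ENNReal.ofReal x) := by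
  unfold proj
  split_ifs with h
  · simp [h]
  · simp [ENNReal.ofReal_min, ENNReal.ofReal_toReal h]

lemma ofReal_proj_le (x : ℝ) (b : ℝ≥0∞) : ENNReal.ofReal (proj x b) ≤ b :=
  (ofReal_proj x b).trans_le (min_le_left _ _)

lemma continuous_proj (b : ℝ≥0∞) : Continuous fun x => proj x b := by
  unfold proj
  split_ifs <;> fun_prop

lemma proj_of_nonpos {x : ℝ} (hx : x ≤ 0) (b : ℝ≥0∞) : proj x b = 0 := by
  unfold proj
  split_ifs <;> simp [max_eq_left hx]

lemma proj_variational (x : ℝ) {b : ℝ≥0∞} {y : ℝ} (hy : 0 ≤ y) (hyb : ENNReal.ofReal y ≤ b) :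
    (y - proj x b) * (x - proj x b) ≤ 0 := by
  rcases le_total x 0 with hx | hx
  · rw [proj_of_nonpos hx]
    nlinarith
  · unfold proj
    rw [max_eq_right hx]
    split_ifs with hb
    · simp
    · rcases le_total b.toReal x with hbx | hbx
      · have hyb' : y ≤ b.toReal := (ENNReal.ofReal_le_iff_le_toReal hb).1 hyb
        rw [min_eq_left hbx]
        nlinarith
      · simp [min_eq_right hbx]

lemma sq_proj_sub_proj_le (x y : ℝ) (b : ℝ≥0∞) :
    (proj x b - proj y b) ^ 2 ≤ (proj x b - proj y b) * (x - y) := by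
  have hx := proj_variational x (proj_nonneg y b) (ofReal_proj_le y b)
  have hy := proj_variational y (proj_nonneg x b) (ofReal_proj_le x b)
  linarith

/-! ### Waterfilling -/

lemma log_one_add_div_sub_lt {a x y : ℝ} (ha : 0 < a) (hx : 0 ≤ x) (hy : 0 ≤ y) (hyx : y ≠ x) :
    Real.log (1 + y / a) - Real.log (1 + x / a) < (y - x) / (a + x) := by
  have hax : 0 < a + x := by positivity
  have hratio : (1 + y / a) / (1 + x / a) = (a + y) / (a + x) := by field_simp
  have hne : (a + y) / (a + x) ≠ 1 := by
    rw [Ne, div_eq_one_iff_eq hax.ne']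
    simpa using hyx
  calc Real.log (1 + y / a) - Real.log (1 + x / a)
      = Real.log ((a + y) / (a + x)) := by
        rw [← Real.log_div (by positivity) (by positivity), hratio]
    _ < (a + y) / (a + x) - 1 := Real.log_lt_sub_one_of_pos (by positivity) hne
    _ = (y - x) / (a + x) := by rw [div_sub_one hax.ne', add_sub_add_left_eq_sub]

section Waterfill

variable {ι : Type*}

/-- Waterfilling at level `μ` over channels `k` with noise levels `a k` and power caps `b k`. -/
noncomputable def waterfill (a : ι → ℝ) (b : ι → ℝ≥0∞) (μ : ℝ) : ι → ℝ :=
  fun k => proj (μ - a k) (b k)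

variable {a a' δ y : ι → ℝ} {b : ι → ℝ≥0∞} {μ ν : ℝ}

lemma sub_waterfill_div_le {k : ι} (ha : 0 < a k) (hμ : 0 < μ) (hy : 0 ≤ y k)
    (hyb : ENNReal.ofReal (y k) ≤ b k) :
    (y k - waterfill a b μ k) / (a k + waterfill a b μ k) ≤ (y k - waterfill a b μ k) / μ := by
  have hvar : (y k - waterfill a b μ k) * (μ - a k - waterfill a b μ k) ≤ 0 :=
    proj_variational (μ - a k) hy hyb
  have hx : 0 ≤ waterfill a b μ k := proj_nonneg _ _
  rw [div_le_div_iff₀ (by positivity) hμ]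
  linarith

lemma waterfill_of_nonpos (ha : ∀ k, 0 < a k) (hμ : μ ≤ 0) : waterfill a b μ = 0 :=
  funext fun k => proj_of_nonpos (by linarith [ha k]) _

variable [Fintype ι]

lemma exists_sum_waterfill_eq (a : ι → ℝ) {P : ℝ} (hP : 0 ≤ P)
    (hb : ENNReal.ofReal P < ∑ k, b k) : ∃ μ, ∑ k, waterfill a b μ k = P := by
  have hcont : Continuous fun μ => ∑ k, waterfill a b μ k :=
    continuous_finsetSum _ fun k _ => (continuous_proj (b k)).comp (by fun_prop)
  refine mem_range_of_exists_le_of_exists_ge hcont ?_ ?_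
  · obtain ⟨μ, hμ⟩ := (Filter.eventually_all.2 fun k => Filter.eventually_le_atBot (a k)).exists
    refine ⟨μ, (Finset.sum_eq_zero fun k _ => ?_).trans_le hP⟩
    exact proj_of_nonpos (sub_nonpos.2 (hμ k)) _
  · have hlim : Filter.Tendsto (fun μ => ∑ k, ENNReal.ofReal (waterfill a b μ k)) Filter.atTop
        (nhds (∑ k, b k)) := by
      refine tendsto_finsetSum _ fun k _ => ?_
      simp only [waterfill, ofReal_proj]
      simpa [sub_eq_add_neg] using tendsto_const_nhds.min (ENNReal.tendsto_ofReal_atTop.comp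
        (Filter.tendsto_atTop_add_const_right _ (-a k) Filter.tendsto_id))
    obtain ⟨μ, hμ⟩ := (hlim.eventually_const_lt hb).exists
    have hμ' : ENNReal.ofReal P < ENNReal.ofReal (∑ k, waterfill a b μ k) :=
      hμ.trans_eq (ENNReal.ofReal_sum_of_nonneg fun k _ => proj_nonneg _ _).symm
    exact ⟨μ, (ENNReal.ofReal_lt_ofReal_iff_of_nonneg hP).1 hμ' |>.le⟩

theorem sum_log_lt_sum_log_waterfill (ha : ∀ k, 0 < a k) (hy : ∀ k, 0 ≤ y k)
    (hyb : ∀ k, ENNReal.ofReal (y k) ≤ b k) (hsum : ∑ k, y k ≤ ∑ k, waterfill a b μ k)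
    (hne : y ≠ waterfill a b μ) :
    ∑ k, Real.log (1 + y k / a k) < ∑ k, Real.log (1 + waterfill a b μ k / a k) := by
  set x := waterfill a b μ
  have hx (k : ι) : 0 ≤ x k := proj_nonneg _ _
  have hμ : 0 < μ := by
    by_contra! hμ
    have hx0 : x = 0 := waterfill_of_nonpos ha hμ
    refine hne ((Fintype.sum_eq_zero_iff_of_nonneg hy).1 (le_antisymm ?_ ?_) |>.trans hx0.symm)
    · simpa [hx0] using hsum
    · exact Finset.sum_nonneg fun k _ => hy k
  have hgain {k : ι} (hk : y k ≠ x k) :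
      Real.log (1 + y k / a k) - Real.log (1 + x k / a k) < (y k - x k) / μ :=
    (log_one_add_div_sub_lt (ha k) (hx k) (hy k) hk).trans_le
      (sub_waterfill_div_le (ha k) hμ (hy k) (hyb k))
  have hgain_le (k : ι) :
      Real.log (1 + y k / a k) - Real.log (1 + x k / a k) ≤ (y k - x k) / μ := by
    by_cases hk : y k = x k
    · simp [hk]
    · exact (hgain hk).le
  obtain ⟨k₀, hk₀⟩ := Function.ne_iff.1 hne
  rw [← sub_neg, ← Finset.sum_sub_distrib]
  calc ∑ k, (Real.log (1 + y k / a k) - Real.log (1 + x k / a k))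
      < ∑ k, (y k - x k) / μ :=
        Finset.sum_lt_sum (fun k _ => hgain_le k) ⟨k₀, Finset.mem_univ _, hgain hk₀⟩
    _ = (∑ k, y k - ∑ k, x k) / μ := by rw [← Finset.sum_div, Finset.sum_sub_distrib]
    _ ≤ 0 := div_nonpos_of_nonpos_of_nonneg (sub_nonpos.2 hsum) hμ.le

/-- Since both responses have the same total power, the water levels cancel after summation. -/
lemma sum_sq_waterfill_sub_le (hsum : ∑ k, waterfill a b μ k = ∑ k, waterfill a' b ν k) :
    ∑ k, (waterfill a b μ k - waterfill a' b ν k) ^ 2 ≤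
      ∑ k, (waterfill a b μ k - waterfill a' b ν k) * (a' k - a k) := by
  calc ∑ k, (waterfill a b μ k - waterfill a' b ν k) ^ 2
      ≤ ∑ k, (waterfill a b μ k - waterfill a' b ν k) * ((μ - a k) - (ν - a' k)) :=
        Finset.sum_le_sum fun k _ => sq_proj_sub_proj_le _ _ _
    _ = (μ - ν) * (∑ k, waterfill a b μ k - ∑ k, waterfill a' b ν k) +
          ∑ k, (waterfill a b μ k - waterfill a' b ν k) * (a' k - a k) := by
        rw [← Finset.sum_sub_distrib, Finset.mul_sum, ← Finset.sum_add_distrib]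
        exact Finset.sum_congr rfl fun k _ => by ring
    _ = ∑ k, (waterfill a b μ k - waterfill a' b ν k) * (a' k - a k) := by
        rw [hsum, sub_self, mul_zero, zero_add]

theorem norm_waterfill_sub_le (hsum : ∑ k, waterfill a b μ k = ∑ k, waterfill a' b ν k)
    (hδ : ∀ k, waterfill a b μ k ≠ waterfill a' b ν k → |a k - a' k| ≤ δ k) :
    ‖WithLp.toLp 2 (waterfill a b μ - waterfill a' b ν)‖ ≤ ‖WithLp.toLp 2 δ‖ := by
  set z := waterfill a b μ - waterfill a' b ν with hz
  have hterm (k : ι) : z k * (a' k - a k) ≤ |z k| * |δ k| := by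
    by_cases hk : waterfill a b μ k = waterfill a' b ν k
    · simp [hz, hk]
    · calc z k * (a' k - a k) ≤ |z k| * |a k - a' k| := by
            rw [abs_sub_comm (a k), ← abs_mul]
            exact le_abs_self _
        _ ≤ |z k| * |δ k| :=
            mul_le_mul_of_nonneg_left ((hδ k hk).trans (le_abs_self _)) (abs_nonneg _)
  have hsq : ‖WithLp.toLp 2 z‖ ^ 2 ≤ ‖WithLp.toLp 2 z‖ * ‖WithLp.toLp 2 δ‖ := by
    calc ‖WithLp.toLp 2 z‖ ^ 2 = ∑ k, z k ^ 2 := EuclideanSpace.real_norm_sq_eq _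
      _ ≤ ∑ k, z k * (a' k - a k) := sum_sq_waterfill_sub_le hsum
      _ ≤ ∑ k, |z k| * |δ k| := Finset.sum_le_sum fun k _ => hterm k
      _ ≤ ‖WithLp.toLp 2 z‖ * ‖WithLp.toLp 2 δ‖ := by
        simpa only [EuclideanSpace.norm_eq] using! Real.sum_mul_le_sqrt_mul_sqrt Finset.univ
          (fun k => |z k|) (fun k => |δ k|)
  nlinarith [norm_nonneg (WithLp.toLp 2 z), norm_nonneg (WithLp.toLp 2 δ)]

end Waterfill

end NCGame

namespace NCGame.GameData

variable {Q N : ℕ} {G : GameData Q N} {q r : Fin Q} {k : Fin N} {p p' : Fin Q → Fin N → ℝ}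
  {x y : Fin N → ℝ}

/-! ### Waterfilling as best response -/

/-- The interference-plus-noise normalized by `|H_qq(k)|² / Γ_q`: the level subtracted from `μ_q` in
the waterfilling response of user `q`. -/
noncomputable def noiseLevel (G : GameData Q N) (q : Fin Q) (p : Fin Q → Fin N → ℝ) : Fin N → ℝ :=
  fun k => G.gap q * G.interf q p k / ‖G.chan q q k‖ ^ 2

lemma gap_pos (G : GameData Q N) (q : Fin Q) : 0 < G.gap q := by linarith [G.one_le_gap q]

lemma norm_chan_diag_pos (G : GameData Q N) (q : Fin Q) (k : Fin N) : 0 < ‖G.chan q q k‖ :=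
  norm_pos_iff.2 (G.chan_diag_ne q k)

lemma interf_pos (hp : G.otherStrats q p) (k : Fin N) : 0 < G.interf q p k :=
  add_pos_of_pos_of_nonneg one_pos <| Finset.sum_nonneg fun r hr =>
    mul_nonneg (by positivity) ((hp r (Finset.ne_of_mem_erase hr)).1 k).1

lemma noiseLevel_pos (hp : G.otherStrats q p) (k : Fin N) : 0 < G.noiseLevel q p k :=
  div_pos (mul_pos (G.gap_pos q) (interf_pos hp k)) (pow_pos (G.norm_chan_diag_pos q k) 2)

lemma interf_update (G : GameData Q N) (q : Fin Q) (p : Fin Q → Fin N → ℝ) (y : Fin N → ℝ)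
    (k : Fin N) : G.interf q (Function.update p q y) k = G.interf q p k := by
  unfold interf
  congr 1
  exact Finset.sum_congr rfl fun r hr => by
    rw [Function.update_of_ne (Finset.ne_of_mem_erase hr)]

lemma payoff_update (G : GameData Q N) (q : Fin Q) (p : Fin Q → Fin N → ℝ) (y : Fin N → ℝ) :
    G.payoff q (Function.update p q y) =
      1 / (N : ℝ) * ∑ k, Real.log (1 + y k / G.noiseLevel q p k) := by
  unfold payoff noiseLevel
  congr 1
  refine Finset.sum_congr rfl fun k _ => ?_
  rw [interf_update, Function.update_self]
  congr 2
  rw [div_div_eq_mul_div, one_div, mul_comm (y k), inv_mul_eq_div, div_div]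

lemma isWFResp.exists_eq_waterfill (h : G.isWFResp q p x) :
    ∃ μ, x = waterfill (G.noiseLevel q p) (G.pmax q) μ :=
  h.1.imp fun _ hμ => funext hμ

lemma isWFResp.sum_eq (h : G.isWFResp q p x) : ∑ k, x k = N := by
  have hN : (N : ℝ) ≠ 0 := by
    intro hN
    simpa [hN] using h.2
  have havg := h.2
  rwa [one_div, inv_mul_eq_div, div_eq_one_iff_eq hN] at havg

lemma isWFResp.mem_stratSet (h : G.isWFResp q p x) : x ∈ G.stratSet q := by
  obtain ⟨μ, rfl⟩ := h.exists_eq_waterfill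
  exact ⟨fun k => ⟨proj_nonneg _ _, ofReal_proj_le _ _⟩, h.2.le⟩

lemma sum_le_of_mem_stratSet (hy : y ∈ G.stratSet q) : ∑ k, y k ≤ N := by
  rcases N.eq_zero_or_pos with rfl | hN
  · simp
  · have havg := hy.2
    rwa [one_div, inv_mul_eq_div, div_le_one (Nat.cast_pos.2 hN)] at havg

lemma exists_isWFResp (hq : (1 : ℝ≥0∞) < 1 / (N : ℝ≥0∞) * ∑ k, G.pmax q k)
    (p : Fin Q → Fin N → ℝ) : ∃ x, G.isWFResp q p x := by
  have hcap : (N : ℝ≥0∞) < ∑ k, G.pmax q k := by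
    by_contra! hle
    refine hq.not_ge ?_
    calc 1 / (N : ℝ≥0∞) * ∑ k, G.pmax q k ≤ 1 / (N : ℝ≥0∞) * N := by gcongr
      _ ≤ 1 := by rw [one_div, mul_comm]; exact ENNReal.mul_inv_le_one _
  have hN : (N : ℝ) ≠ 0 := by
    rw [Nat.cast_ne_zero]
    rintro rfl
    simp at hcap
  obtain ⟨μ, hμ⟩ := exists_sum_waterfill_eq (G.noiseLevel q p) N.cast_nonneg
    (by rwa [ENNReal.ofReal_natCast])
  exact ⟨_, ⟨μ, fun _ => rfl⟩, (congrArg _ hμ).trans (one_div_mul_cancel hN)⟩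

theorem isWFResp.payoff_update_lt (hx : G.isWFResp q p x) (hp : G.otherStrats q p)
    (hy : y ∈ G.stratSet q) (hne : y ≠ x) :
    G.payoff q (Function.update p q y) < G.payoff q (Function.update p q x) := by
  have hN : 0 < N := by
    obtain ⟨k, -⟩ := Function.ne_iff.1 hne
    exact k.pos
  have hsum : ∑ k, y k ≤ ∑ k, x k := (sum_le_of_mem_stratSet hy).trans_eq hx.sum_eq.symm
  obtain ⟨μ, rfl⟩ := hx.exists_eq_waterfill
  rw [payoff_update, payoff_update]
  exact mul_lt_mul_of_pos_left (sum_log_lt_sum_log_waterfill (noiseLevel_pos hp)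
    (fun k => (hy.1 k).1) (fun k => (hy.1 k).2) hsum hne) (by positivity)

lemma isWFResp.forall_payoff_le_iff (hx : G.isWFResp q p x) (hp : G.otherStrats q p)
    (hpq : p q ∈ G.stratSet q) :
    (∀ y ∈ G.stratSet q, G.payoff q (Function.update p q y) ≤ G.payoff q p) ↔ x = p q := by
  refine ⟨fun hbest => ?_, fun heq y hy => ?_⟩
  · by_contra hne
    have hlt := hx.payoff_update_lt hp hpq (Ne.symm hne)
    rw [Function.update_eq_self] at hlt
    exact hlt.not_ge (hbest x hx.mem_stratSet)
  · rcases eq_or_ne y x with rfl | hne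
    · rw [heq, Function.update_eq_self]
    · have hlt := hx.payoff_update_lt hp hy hne
      rw [heq, Function.update_eq_self] at hlt
      exact hlt.le

/-! ### The matrices `H(k)` and `H^max` -/

/-- The normalized cross gain `Γ_q |H_rq(k)|² / |H_qq(k)|²` from user `r` to user `q`,
without the restriction to carriers of `D_q ∩ D_r` made in `H(k)` and `H^max`. -/
noncomputable def crossGain (G : GameData Q N) (q r : Fin Q) (k : Fin N) : ℝ :=
  G.gap q * ‖G.chan r q k‖ ^ 2 / ‖G.chan q q k‖ ^ 2

lemma crossGain_nonneg (G : GameData Q N) (q r : Fin Q) (k : Fin N) : 0 ≤ G.crossGain q r k :=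
  div_nonneg (mul_nonneg (G.gap_pos q).le (sq_nonneg _)) (sq_nonneg _)

lemma Hmax_nonneg (G : GameData Q N) (q r : Fin Q) : 0 ≤ G.Hmax q r := by
  unfold Hmax
  split_ifs
  · exact Real.sSup_nonneg fun _ ⟨k, _, hk⟩ => hk ▸ G.crossGain_nonneg q r k
  · exact le_rfl

lemma crossGain_le_Hmax (hrq : r ≠ q) (hq : k ∈ G.Dset q) (hr : k ∈ G.Dset r) :
    G.crossGain q r k ≤ G.Hmax q r := by
  rw [Hmax, if_pos hrq]
  exact le_csSup (Set.toFinite _).bddAbove ⟨k, ⟨hq, hr⟩, rfl⟩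

lemma abs_Hmat_le_Hmax (G : GameData Q N) (k : Fin N) (q r : Fin Q) :
    |G.Hmat k q r| ≤ G.Hmax q r := by
  unfold Hmat
  split_ifs with h
  · exact (abs_of_nonneg (G.crossGain_nonneg q r k)).trans_le (crossGain_le_Hmax h.1 h.2.1 h.2.2)
  · simpa using G.Hmax_nonneg q r

/-! ### The waterfilling map -/

/-- The admissible strategies of user `q` that load only carriers of `D_q`. Waterfilling responses
have this form, and `H^max` controls the interference between users who play such strategies. -/
def usableSet (G : GameData Q N) (q : Fin Q) : Set (Fin N → ℝ) :=
  G.stratSet q ∩ {x | ∀ k ∉ G.Dset q, x k = 0}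

lemma isWFResp.mem_usableSet (hx : G.isWFResp q p x) (hp : G.otherStrats q p) :
    x ∈ G.usableSet q :=
  ⟨hx.mem_stratSet, fun _ hk => of_not_not fun hne => hk ⟨p, x, hp, hx, hne⟩⟩

lemma zero_mem_usableSet (G : GameData Q N) (q : Fin Q) : 0 ∈ G.usableSet q := by
  simp [usableSet, stratSet]

lemma isClosed_usableSet (G : GameData Q N) (q : Fin Q) : IsClosed (G.usableSet q) := by
  simp only [usableSet, stratSet, Set.ofPred_and, Set.ofPred_forall]
  refine IsClosed.inter (IsClosed.inter ?_ ?_) ?_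
  · exact isClosed_iInter fun k => (isClosed_le (by fun_prop) (by fun_prop)).inter
      (isClosed_le (ENNReal.continuous_ofReal.comp (by fun_prop)) (by fun_prop))
  · exact isClosed_le (by fun_prop) (by fun_prop)
  · exact isClosed_iInter fun k => isClosed_iInter fun _ => isClosed_eq (by fun_prop) (by fun_prop)

lemma noiseLevel_sub (G : GameData Q N) (q : Fin Q) (p p' : Fin Q → Fin N → ℝ) (k : Fin N) :
    G.noiseLevel q p k - G.noiseLevel q p' k =
      ∑ r ∈ Finset.univ.erase q, G.crossGain q r k * (p r k - p' r k) := by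
  simp only [noiseLevel, crossGain, interf]
  rw [← sub_div, ← mul_sub, add_sub_add_left_eq_sub, ← Finset.sum_sub_distrib, Finset.mul_sum,
    Finset.sum_div]
  exact Finset.sum_congr rfl fun r _ => by ring

lemma abs_noiseLevel_sub_le (hp : ∀ r, p r ∈ G.usableSet r) (hp' : ∀ r, p' r ∈ G.usableSet r)
    (hk : k ∈ G.Dset q) :
    |G.noiseLevel q p k - G.noiseLevel q p' k| ≤ ∑ r, G.Hmax q r * |p r k - p' r k| := by
  have hterm {r : Fin Q} (hrq : r ≠ q) :
      |G.crossGain q r k * (p r k - p' r k)| ≤ G.Hmax q r * |p r k - p' r k| := by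
    rw [abs_mul, abs_of_nonneg (G.crossGain_nonneg q r k)]
    by_cases hr : k ∈ G.Dset r
    · exact mul_le_mul_of_nonneg_right (crossGain_le_Hmax hrq hk hr) (abs_nonneg _)
    · simp [(hp r).2 k hr, (hp' r).2 k hr]
  rw [noiseLevel_sub]
  calc |∑ r ∈ Finset.univ.erase q, G.crossGain q r k * (p r k - p' r k)|
      ≤ ∑ r ∈ Finset.univ.erase q, |G.crossGain q r k * (p r k - p' r k)| :=
        Finset.abs_sum_le_sum_abs _ _
    _ ≤ ∑ r ∈ Finset.univ.erase q, G.Hmax q r * |p r k - p' r k| :=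
        Finset.sum_le_sum fun r hr => hterm (Finset.ne_of_mem_erase hr)
    _ ≤ ∑ r, G.Hmax q r * |p r k - p' r k| :=
        Finset.sum_le_sum_of_subset_of_nonneg (Finset.subset_univ _) fun r _ _ =>
          mul_nonneg (G.Hmax_nonneg q r) (abs_nonneg _)

theorem isWFResp.norm_sub_le (hx : G.isWFResp q p x) (hy : G.isWFResp q p' y)
    (hp : ∀ r, p r ∈ G.usableSet r) (hp' : ∀ r, p' r ∈ G.usableSet r) :
    ‖WithLp.toLp 2 (x - y)‖ ≤ ∑ r, G.Hmax q r * ‖WithLp.toLp 2 (p r - p' r)‖ := by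
  have hxD := (hx.mem_usableSet fun r _ => (hp r).1).2
  have hyD := (hy.mem_usableSet fun r _ => (hp' r).1).2
  have hsum : ∑ k, x k = ∑ k, y k := hx.sum_eq.trans hy.sum_eq.symm
  obtain ⟨μ, rfl⟩ := hx.exists_eq_waterfill
  obtain ⟨ν, rfl⟩ := hy.exists_eq_waterfill
  have hnorm_abs (v : Fin N → ℝ) : ‖WithLp.toLp 2 |v|‖ = ‖WithLp.toLp 2 v‖ := by
    simp [EuclideanSpace.norm_eq]
  calc _ ≤ ‖WithLp.toLp 2 (∑ r, G.Hmax q r • |p r - p' r|)‖ := by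
        refine norm_waterfill_sub_le hsum fun k hk => ?_
        have hkD : k ∈ G.Dset q := by
          by_contra hkD
          exact hk ((hxD k hkD).trans (hyD k hkD).symm)
        simpa using abs_noiseLevel_sub_le hp hp' hkD
    _ = ‖∑ r, G.Hmax q r • WithLp.toLp 2 |p r - p' r|‖ := by
        rw [WithLp.toLp_sum]; simp only [WithLp.toLp_smul]
    _ ≤ ∑ r, G.Hmax q r * ‖WithLp.toLp 2 (p r - p' r)‖ := by
        refine norm_sum_le_of_le _ fun r _ => ?_
        rw [norm_smul, hnorm_abs, Real.norm_of_nonneg (G.Hmax_nonneg q r)]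

/-- The simultaneous waterfilling map `p ↦ (WF_q(p_{-q}))_q`. Since `isWFResp` is a predicate, the
response is selected by choice. -/
noncomputable def wfMap (hG : ∀ q, (1 : ℝ≥0∞) < 1 / (N : ℝ≥0∞) * ∑ k, G.pmax q k)
    (p : Fin Q → Fin N → ℝ) : Fin Q → Fin N → ℝ :=
  fun q => (exists_isWFResp (hG q) p).choose

section wfMap

variable (hG : ∀ q, (1 : ℝ≥0∞) < 1 / (N : ℝ≥0∞) * ∑ k, G.pmax q k)

lemma isWFResp_wfMap (p : Fin Q → Fin N → ℝ) (q : Fin Q) : G.isWFResp q p (wfMap hG p q) :=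
  (exists_isWFResp (hG q) p).choose_spec

lemma wfMap_mem_usableSet (hp : ∀ r, p r ∈ G.stratSet r) (q : Fin Q) :
    wfMap hG p q ∈ G.usableSet q :=
  (isWFResp_wfMap hG p q).mem_usableSet fun r _ => hp r

theorem isNE_iff_isFixedPt_wfMap :
    G.isNE p ↔ (∀ q, p q ∈ G.usableSet q) ∧ Function.IsFixedPt (wfMap hG) p := by
  have hbest (hp : ∀ q, p q ∈ G.stratSet q) :
      (∀ q, ∀ y ∈ G.stratSet q, G.payoff q (Function.update p q y) ≤ G.payoff q p) ↔
        Function.IsFixedPt (wfMap hG) p := by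
    rw [Function.IsFixedPt, funext_iff]
    exact forall_congr' fun q =>
      (isWFResp_wfMap hG p q).forall_payoff_le_iff (fun r _ => hp r) (hp q)
  refine ⟨fun ⟨hp, hne⟩ => ?_, fun ⟨hp, hfix⟩ => ?_⟩
  · have hfix := (hbest hp).1 hne
    exact ⟨fun q => hfix ▸ wfMap_mem_usableSet hG hp q, hfix⟩
  · exact ⟨fun q => (hp q).1, (hbest fun q => (hp q).1).2 hfix⟩

theorem existsUnique_isFixedPt_wfMap (hρ : specRad G.Hmax < 1) :
    ∃! p : Fin Q → Fin N → ℝ, (∀ q, p q ∈ G.usableSet q) ∧ Function.IsFixedPt (wfMap hG) p := by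
  let S : Set (Fin Q → EuclideanSpace ℝ (Fin N)) := {x | ∀ q, (x q).ofLp ∈ G.usableSet q}
  have hS : IsClosed S := by
    simp only [S, Set.ofPred_forall]
    exact isClosed_iInter fun q => (G.isClosed_usableSet q).preimage (by fun_prop)
  have : CompleteSpace S := hS.completeSpace_coe
  have : Nonempty S := ⟨⟨0, G.zero_mem_usableSet⟩⟩
  let T (x : S) : S := ⟨fun q => WithLp.toLp 2 (wfMap hG (fun r => (x.1 r).ofLp) q),
    wfMap_mem_usableSet hG fun r => (x.2 r).1⟩
  obtain ⟨x, hx, hunique⟩ : ∃! x, Function.IsFixedPt T x := by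
    refine existsUnique_isFixedPt_of_le_mulVec (d := fun x y q => dist (x.1 q) (y.1 q))
      (fun _ _ _ => dist_nonneg) ?_ G.Hmax_nonneg ?_ ?_
    · exact fun x y => dist_eq_norm_dist x.1 y.1
    · rwa [← ofReal_specRad, ENNReal.ofReal_lt_one]
    · intro x y q
      simp only [dist_eq_norm]
      exact (isWFResp_wfMap hG _ q).norm_sub_le (isWFResp_wfMap hG _ q) x.2 y.2
  refine ⟨fun q => (x.1 q).ofLp, ⟨x.2, ?_⟩, fun p ⟨hp, hfix⟩ => ?_⟩
  · exact funext fun q => congrArg (fun y : S => (y.1 q).ofLp) hx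
  · have hfixT : Function.IsFixedPt T ⟨fun q => WithLp.toLp 2 (p q), hp⟩ :=
      Subtype.ext <| funext fun q => congrArg (WithLp.toLp 2) (congrFun hfix q)
    exact funext fun q => congrArg (fun y : S => (y.1 q).ofLp) (hunique _ hfixT)

end wfMap

end NCGame.GameData

/-- **Corollary 1 (condition C2 is sufficient for condition C1).** If `ρ(H^max) < 1`, then
`ρ(H(k)) < 1` for every carrier `k`; consequently game `G` admits exactly one Nash
equilibrium. -/
theorem NCGame.Hmax_cond_implies_unique_NE (Q N : ℕ) (hQ : 1 ≤ Q) (hN : 1 ≤ N)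
    (G : NCGame.GameData Q N)
    (hbudget : ∀ q, (1 : ℝ≥0∞) < (1 / (N : ℝ≥0∞)) * ∑ k, G.pmax q k)
    (hρ : NCGame.specRad G.Hmax < 1) :
    (∀ k : Fin N, NCGame.specRad (G.Hmat k) < 1) ∧
    ∃! p : Fin Q → Fin N → ℝ, G.isNE p := by
  refine ⟨fun k => (NCGame.specRad_mono (G.abs_Hmat_le_Hmax k)).trans_lt hρ, ?_⟩
  simpa only [NCGame.GameData.isNE_iff_isFixedPt_wfMap hbudget] using
    NCGame.GameData.existsUnique_isFixedPt_wfMap hbudget hρ
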